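/- arXiv:math/0002091 — 2 statements merged into one kernel-verified Lean document; each statement's English description precedes it below -/
import Mathlib

section
/- Let S be an abelian semigroup containing an identity element 0 (i.e., a commutative monoid), let r be a positive integer, and let A₁, …, A_r and B be finite nonempty subsets of S. Then there exists a polynomial p(z₁, …, z_r) with rational coefficients such that for all sufficiently large integers h₁, …, h_r (i.e., whenever min(h₁, …, h_r) exceeds some threshold N), the cardinality of the sumset B + h₁A₁ + ⋯ + h_rA_r equals p(h₁, …, h_r). -/
/-!
Encode a choice of summands by a family `x` of multiplicity vectors `x i : A i → ℕ`. The degree of `x` is the family of sums `∑ a, x i a`, and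
`B + ∑ i, h i • A i` is the image of `B × {x | deg x = h}` under the evaluation map
`(b, x) ↦ b + ∑ i, ∑ a, x i a • a`.

Order the pairs `(b, x)` lexicographically. Each element of the sumset has a unique least
representative of degree `h`, so the sumset has as many elements as there are least pairs. Since the
order, the degree and the equality of values are all compatible with adding a fixed family to `x`,
for each `b` the `x` such that `(b, x)` is least form a lower set (`exists_lowerSets`).

It remains to count the points of degree `h` in a lower set. By Dickson's lemma its complement is a
finite union of cones `{x | m ≤ x}`. Removing the cones one at a time
(`isEventuallyPoly_avoid`) reduces the count to that of a single cone, which is a product of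
binomial coefficients, and hence a polynomial in `h` as soon as `h` dominates the degree of `m`
(`isEventuallyPoly_cone`).
-/

open Pointwise

namespace KhovanskiiMulti

open Finset

/-- `f` agrees with a rational polynomial at all points with sufficiently large coordinates. -/
def IsEventuallyPoly {r : ℕ} (f : (Fin r → ℕ) → ℚ) : Prop :=
  ∃ p : MvPolynomial (Fin r) ℚ, ∃ N : ℕ, ∀ h : Fin r → ℕ, (∀ i, N < h i) →
    f h = MvPolynomial.eval (fun i => (h i : ℚ)) p

lemma IsEventuallyPoly.sub {r : ℕ} {f g : (Fin r → ℕ) → ℚ} (hf : IsEventuallyPoly f)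
    (hg : IsEventuallyPoly g) : IsEventuallyPoly (fun h => f h - g h) := by
  obtain ⟨p, N, hp⟩ := hf
  obtain ⟨q, M, hq⟩ := hg
  refine ⟨p - q, max N M, fun h hh => ?_⟩
  dsimp only
  rw [map_sub, hp h fun i => (le_max_left N M).trans_lt (hh i),
    hq h fun i => (le_max_right N M).trans_lt (hh i)]

lemma IsEventuallyPoly.sum {r : ℕ} {ι : Type*} (s : Finset ι) {f : ι → (Fin r → ℕ) → ℚ}
    (hf : ∀ b, IsEventuallyPoly (f b)) : IsEventuallyPoly (fun h => ∑ b ∈ s, f b h) := by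
  choose p N hp using hf
  refine ⟨∑ b ∈ s, p b, s.sup N, fun h hh => ?_⟩
  rw [map_sum]
  exact sum_congr rfl fun b hb => hp b h fun i => (le_sup hb).trans_lt (hh i)

lemma card_piAntidiag_univ {α : Type*} [Fintype α] [DecidableEq α] [Nonempty α] (n : ℕ) :
    (piAntidiag (univ : Finset α) n).card =
      (n + (Fintype.card α - 1)).choose (Fintype.card α - 1) := by
  have hpos : 0 < Fintype.card α := Fintype.card_pos
  rw [← map_sym_eq_piAntidiag, card_map, sym_univ, card_univ, Sym.card_sym_eq_choose,
    ← Nat.choose_symm_of_eq_add (show Fintype.card α + n - 1 = (Fintype.card α - 1) + n by omega)]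
  congr 1
  omega

open Classical in
lemma card_piAntidiag_cone {α : Type*} [Fintype α] [DecidableEq α] (m : α → ℕ) (n : ℕ)
    (hn : ∑ a, m a ≤ n) :
    ((piAntidiag univ n).filter (m ≤ ·)).card =
      (piAntidiag (univ : Finset α) (n - ∑ a, m a)).card := by
  symm
  refine card_bij (fun y _ => m + y) ?_ (fun _ _ _ _ h => add_left_cancel h) ?_
  · intro y hy
    simp only [mem_piAntidiag, mem_univ, implies_true, and_true, mem_filter, Pi.add_apply,
      sum_add_distrib] at hy ⊢
    replace hy : ∑ a, y a = n - ∑ a, m a := hy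
    exact ⟨by omega, le_self_add⟩
  · intro y hy
    simp only [mem_piAntidiag, mem_univ, implies_true, and_true, mem_filter] at hy
    obtain ⟨z, rfl⟩ := exists_add_of_le hy.2
    refine ⟨z, ?_, rfl⟩
    simp only [Pi.add_apply, sum_add_distrib] at hy
    simp only [mem_piAntidiag, mem_univ, implies_true, and_true]
    change ∑ a, z a = _
    omega

section Count

variable {r : ℕ} {α : Fin r → Type*} [∀ i, Fintype (α i)] [∀ i, DecidableEq (α i)]

/-- The families of multiplicity vectors of degree `h`. -/
def level (h : Fin r → ℕ) : Finset (∀ i, α i → ℕ) :=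
  Fintype.piFinset fun i => piAntidiag univ (h i)

lemma mem_level {h : Fin r → ℕ} {x : ∀ i, α i → ℕ} :
    x ∈ level h ↔ ∀ i, ∑ a, x i a = h i := by
  simp [level]

open Classical in
lemma isEventuallyPoly_cone [∀ i, Nonempty (α i)] (m : ∀ i, α i → ℕ) :
    IsEventuallyPoly fun h => (((level h).filter (m ≤ ·)).card : ℚ) := by
  refine ⟨∏ i, Polynomial.aeval (MvPolynomial.X i)
    (Polynomial.preHilbertPoly ℚ (Fintype.card (α i) - 1) (∑ a, m i a)),
    univ.sup fun i => ∑ a, m i a, fun h hh => ?_⟩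
  have hle : ∀ i, ∑ a, m i a ≤ h i := fun i =>
    (le_sup (f := fun i => ∑ a, m i a) (mem_univ i)).trans (hh i).le
  have key : (level h).filter (m ≤ ·) =
      Fintype.piFinset fun i => (piAntidiag univ (h i)).filter (m i ≤ ·) := by
    ext x
    simp [level, Pi.le_def, forall_and]
  dsimp only
  rw [key, Fintype.card_piFinset, map_prod, Nat.cast_prod]
  refine prod_congr rfl fun i _ => ?_
  rw [card_piAntidiag_cone _ _ (hle i), card_piAntidiag_univ,
    ← Polynomial.preHilbertPoly_eq_choose_sub_add ℚ _ (hle i)]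
  have := Polynomial.aeval_algHom_apply (MvPolynomial.aeval fun i => (h i : ℚ))
    (MvPolynomial.X i : MvPolynomial (Fin r) ℚ)
    (Polynomial.preHilbertPoly ℚ (Fintype.card (α i) - 1) (∑ a, m i a))
  rw [MvPolynomial.aeval_X, MvPolynomial.aeval_eq_eval] at this
  simpa [Polynomial.coe_aeval_eq_eval] using this

open Classical in
/-- Removing the cone above `n` from a cone above `m` removes the cone above `m ⊔ n`; the count for
a finite set of removed cones follows by induction. -/
lemma isEventuallyPoly_avoid [∀ i, Nonempty (α i)] (F : Finset (∀ i, α i → ℕ)) :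
    ∀ m : ∀ i, α i → ℕ, IsEventuallyPoly fun h =>
      (((level h).filter fun x => m ≤ x ∧ ∀ n ∈ F, ¬ n ≤ x).card : ℚ) := by
  induction F using Finset.induction_on with
  | empty => intro m; simpa using isEventuallyPoly_cone m
  | insert n F _ ih =>
    intro m
    convert (ih m).sub (ih (m ⊔ n)) using 2 with h
    rw [eq_sub_iff_add_eq, ← Nat.cast_add, ← card_union_of_disjoint]
    · congr 2
      ext x
      simp only [mem_union, mem_filter, mem_insert, forall_eq_or_imp, sup_le_iff]
      tauto
    · rw [disjoint_left]
      intro x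
      simp only [mem_filter, mem_insert, forall_eq_or_imp, sup_le_iff]
      tauto

open Classical in
lemma isEventuallyPoly_lowerSet [∀ i, Nonempty (α i)] {T : Set (∀ i, α i → ℕ)}
    (hT : IsLowerSet T) :
    IsEventuallyPoly fun h => (((level h).filter (· ∈ T)).card : ℚ) := by
  -- Dickson's lemma: the minimal elements of the complement are finite in number.
  have hfin : {x | Minimal (· ∉ T) x}.Finite :=
    WellQuasiOrderedLE.finite_of_isAntichain (setOfPred_minimal_antichain _)
  convert isEventuallyPoly_avoid hfin.toFinset 0 using 6 with h x
  simp only [zero_le, true_and, Set.Finite.mem_toFinset, Set.mem_ofPred_eq]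
  constructor
  · exact fun hx n hn hnx => hn.prop (hT hnx hx)
  · intro hx
    by_contra hxT
    obtain ⟨n, hnx, hn⟩ := exists_minimal_le_of_wellFoundedLT (· ∉ T) x hxT
    exact hx n hn hnx

open Classical in
/-- If equality of the values of `φ` is preserved by translation, then the image of each level is
in bijection with the points of that level in finitely many fixed lower sets, namely the least
representatives of the values for a lexicographic order. -/
lemma exists_lowerSets {S β : Type*} [DecidableEq S] [Fintype β] (φ : β × (∀ i, α i → ℕ) → S)
    (hφ : ∀ b b' x x' z, φ (b, x) = φ (b', x') → φ (b, x + z) = φ (b', x' + z)) :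
    ∃ T : β → Set (∀ i, α i → ℕ), (∀ b, IsLowerSet (T b)) ∧
      ∀ h, ((univ ×ˢ level h).image φ).card = ∑ b, ((level h).filter (· ∈ T b)).card := by
  let e := Fintype.equivFin (β ⊕ Σ i, α i)
  -- The sort key of `(b, x)`: the vector `(Pi.single b 1, x)`, ordered lexicographically.
  let K : β × (∀ i, α i → ℕ) → Lex (Fin (Fintype.card (β ⊕ Σ i, α i)) → ℕ) := fun p =>
    toLex fun j => Sum.elim (Pi.single p.1 1 : β → ℕ) (fun q => p.2 q.1 q.2) (e.symm j)
  let κ : (∀ i, α i → ℕ) → Lex (Fin (Fintype.card (β ⊕ Σ i, α i)) → ℕ) := fun z =>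
    toLex fun j => Sum.elim (0 : β → ℕ) (fun q => z q.1 q.2) (e.symm j)
  have hK : ∀ b x z, K (b, x + z) = K (b, x) + κ z := by
    intro b x z
    simp only [K, κ, ← toLex_add]
    congr 1
    funext j
    rcases h : e.symm j with c | q <;> simp [h]
  have hinj : Function.Injective K := by
    rintro ⟨b, x⟩ ⟨b', x'⟩ h
    have h' : ∀ j, Sum.elim (Pi.single b 1 : β → ℕ) (fun q : Σ i, α i => x q.1 q.2) j =
        Sum.elim (Pi.single b' 1 : β → ℕ) (fun q => x' q.1 q.2) j := by
      intro j
      have := congrFun (toLex.injective h) (e j)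
      simpa using this
    have hb : b = b' := by
      have := h' (.inl b)
      by_contra hne
      simp [hne] at this
    have hx : x = x' := by
      funext i a
      exact h' (.inr ⟨i, a⟩)
    rw [hb, hx]
  obtain ⟨T, hT⟩ : ∃ T : β → Set (∀ i, α i → ℕ), ∀ b x, x ∈ T b ↔
      ∀ b' x', (∀ i, ∑ a, x' i a = ∑ a, x i a) → φ (b', x') = φ (b, x) →
        K (b, x) ≤ K (b', x') := ⟨fun b => {x | _}, fun b x => Iff.rfl⟩
  refine ⟨T, fun b x y hyx hx => ?_, fun h => ?_⟩
  · obtain ⟨z, rfl⟩ := exists_add_of_le hyx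
    rw [hT] at hx ⊢
    intro b' x' hdeg heq
    have := hx b' (x' + z) (fun i => by simp [sum_add_distrib, hdeg i]) (hφ _ _ _ _ z heq)
    rw [hK, hK] at this
    exact le_of_add_le_add_right this
  · have hcard : ∑ b, ((level h).filter (· ∈ T b)).card =
        ((univ ×ˢ level h).filter fun p : β × (∀ i, α i → ℕ) => p.2 ∈ T p.1).card := by
      simp only [card_filter, sum_product]
    rw [hcard]
    symm
    refine card_bij (fun p _ => φ p) ?_ ?_ ?_
    · exact fun p hp => mem_image_of_mem _ (mem_filter.1 hp).1
    · rintro ⟨b, x⟩ hp ⟨b', x'⟩ hp' heq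
      simp only [mem_filter, mem_product, mem_univ, true_and, mem_level, hT] at hp hp'
      refine hinj (le_antisymm ?_ ?_)
      · exact hp.2 b' x' (fun i => by rw [hp.1, hp'.1]) heq.symm
      · exact hp'.2 b x (fun i => by rw [hp.1, hp'.1]) heq
    · intro s hs
      obtain ⟨p, hp, rfl⟩ := mem_image.1 hs
      obtain ⟨q, hq, hmin⟩ := exists_min_image
        ((univ ×ˢ level h).filter fun q => φ q = φ p) K ⟨p, by simp [hp]⟩
      simp only [mem_filter, mem_product, mem_univ, true_and, mem_level] at hq hmin
      refine ⟨q, ?_, hq.2⟩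
      simp only [mem_filter, mem_product, mem_univ, true_and, mem_level, hT]
      refine ⟨hq.1, fun b' x' hdeg heq => hmin (b', x') ⟨fun i => ?_, heq.trans hq.2⟩⟩
      rw [hdeg, hq.1]

end Count

lemma mem_nsmul_iff {S : Type*} [AddCommMonoid S] [DecidableEq S] (A : Finset S) (n : ℕ) (s : S) :
    s ∈ n • A ↔ ∃ y : A → ℕ, ∑ a, y a = n ∧ ∑ a, y a • (a : S) = s := by
  induction n generalizing s with
  | zero =>
    simp only [zero_smul, mem_zero, sum_eq_zero_iff, mem_univ, true_imp_iff]
    constructor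
    · rintro rfl
      exact ⟨0, by simp⟩
    · rintro ⟨y, hy, rfl⟩
      simp [hy]
  | succ n ih =>
    rw [succ_nsmul, mem_add]
    constructor
    · rintro ⟨t, ht, a, ha, rfl⟩
      obtain ⟨y, hy, rfl⟩ := (ih t).1 ht
      refine ⟨y + Pi.single ⟨a, ha⟩ 1, by simp [sum_add_distrib, hy, -univ_eq_attach], ?_⟩
      simp [add_smul, sum_add_distrib, Pi.single_apply, ite_smul]
    · rintro ⟨y, hy, rfl⟩
      obtain ⟨a, ha⟩ : ∃ a, y a ≠ 0 := by
        by_contra! hne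
        simp [hne] at hy
      have hsplit : y = (y - Pi.single a 1) + Pi.single a 1 := by
        funext c
        by_cases hc : c = a
        · subst hc
          simp
          omega
        · simp [hc]
      generalize y - Pi.single a 1 = z at hsplit
      subst hsplit
      refine ⟨∑ c, z c • (c : S), (ih _).2 ⟨z, ?_, rfl⟩, a, a.2, ?_⟩
      · simpa [sum_add_distrib] using hy
      · simp [add_smul, sum_add_distrib, Pi.single_apply, ite_smul]

lemma mem_sum_nsmul_iff {S : Type*} [AddCommMonoid S] [DecidableEq S] {r : ℕ}
    (A : Fin r → Finset S) (h : Fin r → ℕ) (s : S) :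
    s ∈ ∑ i, h i • A i ↔ ∃ x ∈ level (α := fun i => A i) h, ∑ i, ∑ a, x i a • (a : S) = s := by
  rw [← mem_coe, coe_sum, Set.mem_fintype_sum]
  simp only [mem_coe, mem_nsmul_iff, mem_level]
  constructor
  · rintro ⟨g, hg, rfl⟩
    choose x hx hxg using hg
    exact ⟨x, hx, by simp [hxg, -univ_eq_attach]⟩
  · rintro ⟨x, hx, rfl⟩
    exact ⟨_, fun i => ⟨x i, hx i, rfl⟩, rfl⟩

end KhovanskiiMulti

/-- **Khovanskii-type theorem for several summands** (Nathanson–Khovanskii).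
If `A₁, …, A_r` and `B` are finite nonempty subsets of a commutative monoid `S`, then the
growth function `(h₁, …, h_r) ↦ |B + h₁A₁ + ⋯ + h_rA_r|` agrees with a polynomial with
rational coefficients for all sufficiently large `h₁, …, h_r`. -/
theorem eventually_polynomial_growth_multi
    {S : Type*} [AddCommMonoid S] [DecidableEq S] (r : ℕ) (hr : 0 < r)
    (A : Fin r → Finset S) (B : Finset S)
    (hA : ∀ i, (A i).Nonempty) (hB : B.Nonempty) :
    ∃ p : MvPolynomial (Fin r) ℚ, ∃ N : ℕ, ∀ h : Fin r → ℕ, (∀ i, N < h i) →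
      ((B + ∑ i, h i • A i).card : ℚ) = MvPolynomial.eval (fun i => (h i : ℚ)) p := by
  classical
  have hne : ∀ i, Nonempty (A i) := fun i => (hA i).to_subtype
  let φ : B × (∀ i, A i → ℕ) → S := fun p => p.1 + ∑ i, ∑ a, p.2 i a • (a : S)
  have hadd : ∀ b x z, φ (b, x + z) = φ (b, x) + ∑ i, ∑ a, z i a • (a : S) := by
    intro b x z
    simp [φ, add_smul, Finset.sum_add_distrib, add_assoc]
  obtain ⟨T, hT, hcard⟩ := KhovanskiiMulti.exists_lowerSets φ
    (fun b b' x x' z heq => by rw [hadd, hadd, heq])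
  have himage : ∀ h : Fin r → ℕ, B + ∑ i, h i • A i =
      (Finset.univ ×ˢ KhovanskiiMulti.level h).image φ := by
    intro h
    ext s
    simp only [Finset.mem_add, KhovanskiiMulti.mem_sum_nsmul_iff, Finset.mem_image,
      Finset.mem_product, Finset.mem_univ, true_and, Prod.exists, φ]
    constructor
    · rintro ⟨b, hb, _, ⟨x, hx, rfl⟩, rfl⟩
      exact ⟨⟨b, hb⟩, x, hx, rfl⟩
    · rintro ⟨b, x, hx, rfl⟩
      exact ⟨b, b.2, _, ⟨x, hx, rfl⟩, rfl⟩
  obtain ⟨p, N, hp⟩ := KhovanskiiMulti.IsEventuallyPoly.sum Finset.univ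
    fun b => KhovanskiiMulti.isEventuallyPoly_lowerSet (hT b)
  refine ⟨p, N, fun h hh => ?_⟩
  rw [himage, hcard, Nat.cast_sum]
  exact hp h hh
end

section
/- Let S be an abelian semigroup containing an identity element 0 (i.e., a commutative monoid), and let A and B be finite nonempty subsets of S. Then there exists a polynomial p(z) with rational coefficients such that |B + hA| = p(h) for all sufficiently large integers h. -/
open Pointwise

/-!
Enumerate `A` as `α i` (`i : Fin k`) and `B` as `β b` (`b : Fin l`). An element of `B + hA` is
`β b + ∑ i, x i • α i` for some `b` and some `x : Fin k → ℕ` of total degree `h`; among all such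
representations of degree `h` there is exactly one that is least in the lexicographic order.
As this order is compatible with translation of the exponent vectors, for fixed `b` the exponents of
least representations form a lower set `D b` of `ℕ ^ k`, so `|B + hA|` is the sum over `b` of
the number of points of degree `h` in `D b` (`card_image_eq_card_least`).

It remains to see that the number of points of degree `h` in a lower set `D` of `ℕ ^ k` is
eventually polynomial in `h` (`eventuallyPoly_lowerSet`). This is by induction on `k`: by Dickson's
lemma the slices of `D` along the first coordinate are eventually constant
(`exists_slice_stable`), so the count is a finite sum of shifted slice counts plus a
shifted partial sum of a single slice count, and eventually polynomial functions are closed under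
these operations.
-/

/-- `f` agrees with a rational polynomial at all sufficiently large natural numbers. -/
def EventuallyPoly (f : ℕ → ℕ) : Prop :=
  ∃ p : Polynomial ℚ, ∃ N : ℕ, ∀ h : ℕ, N < h → (f h : ℚ) = p.eval (h : ℚ)

namespace EventuallyPoly

lemma of_shift {f g : ℕ → ℕ} (hf : EventuallyPoly f) (m : ℕ) (hg : ∀ h, g (h + m) = f h) :
    EventuallyPoly g := by
  obtain ⟨p, N, hp⟩ := hf
  refine ⟨p.comp (Polynomial.X - Polynomial.C (m : ℚ)), N + m, fun h hh => ?_⟩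
  obtain ⟨j, rfl⟩ : ∃ j, h = j + m := ⟨h - m, by omega⟩
  rw [hg, hp j (by omega)]
  simp

lemma add {f g : ℕ → ℕ} (hf : EventuallyPoly f) (hg : EventuallyPoly g) :
    EventuallyPoly (fun h => f h + g h) := by
  obtain ⟨p, N, hp⟩ := hf
  obtain ⟨q, M, hq⟩ := hg
  refine ⟨p + q, max N M, fun h hh => ?_⟩
  simp [hp h (by omega), hq h (by omega)]

lemma sum {ι : Type*} (s : Finset ι) {f : ι → ℕ → ℕ} (hf : ∀ i ∈ s, EventuallyPoly (f i)) :
    EventuallyPoly (fun h => ∑ i ∈ s, f i h) := by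
  classical
  induction s using Finset.induction_on with
  | empty => exact ⟨0, 0, by simp⟩
  | insert a s ha ih =>
    simp only [Finset.sum_insert ha]
    exact (hf a (by simp)).add (ih fun i hi => hf i (by simp [hi]))

/-- Discrete antidifferentiation of polynomials, by Faulhaber's formula for each monomial. -/
lemma exists_poly_sum_range (p : Polynomial ℚ) :
    ∃ q : Polynomial ℚ, ∀ n : ℕ, ∑ j ∈ Finset.range n, p.eval (j : ℚ) = q.eval (n : ℚ) := by
  induction p using Polynomial.induction_on' with
  | add p q hp hq =>
    obtain ⟨P, hP⟩ := hp
    obtain ⟨Q, hQ⟩ := hq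
    exact ⟨P + Q, fun n => by simp [Finset.sum_add_distrib, hP, hQ]⟩
  | monomial d c =>
    refine ⟨Polynomial.C c * ∑ i ∈ Finset.range (d + 1),
      Polynomial.C (bernoulli i * ((d + 1).choose i) / (d + 1)) * Polynomial.X ^ (d + 1 - i),
      fun n => ?_⟩
    simp only [Polynomial.eval_monomial, ← Finset.mul_sum, sum_range_pow, Polynomial.eval_mul,
      Polynomial.eval_C, Polynomial.eval_finsetSum, Polynomial.eval_pow, Polynomial.eval_X]
    congr 1
    exact Finset.sum_congr rfl fun i _ => by ring

lemma sum_range {f : ℕ → ℕ} (hf : EventuallyPoly f) :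
    EventuallyPoly (fun h => ∑ j ∈ Finset.range (h + 1), f j) := by
  obtain ⟨p, N, hp⟩ := hf
  obtain ⟨q, hq⟩ := exists_poly_sum_range p
  -- The finitely many values where `f` and `p` differ contribute a constant.
  refine ⟨q.comp (Polynomial.X + 1) +
    Polynomial.C (∑ j ∈ Finset.range (N + 1), ((f j : ℚ) - p.eval (j : ℚ))), N, fun h hh => ?_⟩
  have h1 : ∑ j ∈ Finset.range (h + 1), ((f j : ℚ) - p.eval (j : ℚ)) =
      ∑ j ∈ Finset.range (N + 1), ((f j : ℚ) - p.eval (j : ℚ)) := by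
    symm
    apply Finset.sum_subset
    · intro j hj
      simp only [Finset.mem_range] at *
      omega
    · intro j _ hj
      simp only [Finset.mem_range] at hj
      rw [hp j (by omega), sub_self]
  have h2 := hq (h + 1)
  rw [Polynomial.eval_add, Polynomial.eval_C, ← h1, Finset.sum_sub_distrib, h2]
  simp

end EventuallyPoly

/-- Dickson's lemma for lower sets: the slices of a lower set of `ℕ ^ (k + 1)` along the first
coordinate are constant from some point on. The witness `m` bounds the first coordinates of the
finitely many minimal elements of the complement. -/
lemma exists_slice_stable {k : ℕ} {D : Set (Fin (k + 1) → ℕ)} (hD : IsLowerSet D) :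
    ∃ m : ℕ, ∀ n, m ≤ n → ∀ x : Fin k → ℕ,
      (Fin.cons n x : Fin (k + 1) → ℕ) ∈ D ↔ (Fin.cons m x : Fin (k + 1) → ℕ) ∈ D := by
  have hfin : {x | Minimal (fun y => y ∉ D) x}.Finite :=
    WellQuasiOrderedLE.finite_of_isAntichain (setOfPred_minimal_antichain _)
  obtain ⟨m, hm⟩ := (hfin.image (fun x => x 0)).bddAbove
  refine ⟨m, fun n hn x => ⟨fun h => hD ?_ h, fun h => ?_⟩⟩
  · exact Fin.cons_le_cons.2 ⟨hn, le_rfl⟩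
  · by_contra hc
    obtain ⟨y, hy, hmin⟩ := exists_minimal_le_of_wellFoundedLT (fun y => y ∉ D) _ hc
    refine hmin.prop (hD (fun i => ?_) h)
    refine Fin.cases ?_ (fun j => ?_) i
    · simpa using hm ⟨y, hmin, rfl⟩
    · simpa using hy j.succ

open Classical in
/-- The number of points of total degree `h` in `D ⊆ ℕ ^ k`. -/
noncomputable def degCount {k : ℕ} (D : Set (Fin k → ℕ)) (h : ℕ) : ℕ :=
  ((Finset.Nat.antidiagonalTuple k h).filter (· ∈ D)).card

lemma degCount_succ {k : ℕ} (D : Set (Fin (k + 1) → ℕ)) (h : ℕ) :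
    degCount D h = ∑ n ∈ Finset.range (h + 1),
      degCount {x : Fin k → ℕ | (Fin.cons n x : Fin (k + 1) → ℕ) ∈ D} (h - n) := by
  classical
  rw [← Finset.Nat.sum_antidiagonal_eq_sum_range_succ
    (fun n j => degCount {x : Fin k → ℕ | (Fin.cons n x : Fin (k + 1) → ℕ) ∈ D} j)]
  unfold degCount
  rw [← Finset.card_sigma]
  refine Finset.card_bij' (fun x _ => ⟨(x 0, ∑ i : Fin k, x i.succ), Fin.tail x⟩)
    (fun y _ => Fin.cons y.1.1 y.2) ?_ ?_ ?_ ?_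
  · intro x hx
    simp only [Finset.mem_filter, Finset.Nat.mem_antidiagonalTuple, Fin.sum_univ_succ] at hx
    simp only [Finset.mem_sigma, Finset.HasAntidiagonal.mem_antidiagonal, Finset.mem_filter,
      Finset.Nat.mem_antidiagonalTuple, Set.mem_ofPred_eq, Fin.cons_self_tail]
    exact ⟨hx.1, rfl, hx.2⟩
  · rintro ⟨⟨n, j⟩, x⟩ hx
    simp only [Finset.mem_sigma, Finset.HasAntidiagonal.mem_antidiagonal, Finset.mem_filter,
      Finset.Nat.mem_antidiagonalTuple, Set.mem_ofPred_eq] at hx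
    simp only [Finset.mem_filter, Finset.Nat.mem_antidiagonalTuple, Fin.sum_univ_succ,
      Fin.cons_zero, Fin.cons_succ]
    exact ⟨by omega, hx.2.2⟩
  · intro x _
    exact Fin.cons_self_tail x
  · rintro ⟨⟨n, j⟩, x⟩ hx
    simp only [Finset.mem_sigma, Finset.HasAntidiagonal.mem_antidiagonal, Finset.mem_filter,
      Finset.Nat.mem_antidiagonalTuple, Set.mem_ofPred_eq] at hx
    obtain ⟨-, rfl, -⟩ := hx
    simp

/-- The Hilbert function of a lower set of `ℕ ^ k` is eventually polynomial. -/
lemma eventuallyPoly_lowerSet {k : ℕ} {D : Set (Fin k → ℕ)} (hD : IsLowerSet D) :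
    EventuallyPoly (degCount D) := by
  induction k with
  | zero =>
    refine ⟨0, 0, fun h hh => ?_⟩
    obtain ⟨j, rfl⟩ : ∃ j, h = j + 1 := ⟨h - 1, by omega⟩
    simp [degCount]
  | succ k ih =>
    have hs (n : ℕ) : IsLowerSet {x : Fin k → ℕ | (Fin.cons n x : Fin (k + 1) → ℕ) ∈ D} :=
      fun x y hxy hx => hD (Fin.cons_le_cons.2 ⟨le_rfl, hxy⟩) hx
    obtain ⟨m, hm⟩ := exists_slice_stable hD
    set E : ℕ → Set (Fin k → ℕ) := fun n => {x | (Fin.cons n x : Fin (k + 1) → ℕ) ∈ D} with hE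
    have hEm (n : ℕ) : E (m + n) = E m := Set.ext fun x => hm (m + n) (by omega) x
    -- In degree `h + m`, the slices `n < m` are summed separately from the constant ones.
    refine EventuallyPoly.of_shift (m := m) (f := fun h =>
      ∑ n ∈ Finset.range m, degCount (E n) (h + m - n) +
        ∑ j ∈ Finset.range (h + 1), degCount (E m) j) ?_ ?_
    · refine .add (.sum _ fun n hn => ?_) (ih (hs m)).sum_range
      have hn : n < m := Finset.mem_range.1 hn
      obtain ⟨p, N, hp⟩ := ih (hs n)
      refine ⟨p.comp (Polynomial.X + Polynomial.C ((m - n : ℕ) : ℚ)), N, fun h hh => ?_⟩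
      beta_reduce
      rw [Nat.add_sub_assoc hn.le, hp _ (by omega)]
      simp
    · intro h
      rw [degCount_succ, show h + m + 1 = m + (h + 1) by omega, Finset.sum_range_add]
      congr 1
      rw [← Finset.sum_range_reflect (fun j => degCount (E m) j)]
      refine Finset.sum_congr rfl fun n hn => ?_
      change degCount (E (m + n)) _ = _
      rw [hEm]
      congr 1
      omega

/-- Each fibre of `f` on `T` contains exactly one point minimizing an injective `key`. -/
lemma card_image_eq_card_least {P S L : Type*} [DecidableEq S] [LinearOrder L] (T : Finset P)
    (f : P → S) (key : P → L) (hkey : Function.Injective key)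
    [DecidablePred fun p => ∀ q ∈ T, f q = f p → key p ≤ key q] :
    (T.image f).card = (T.filter fun p => ∀ q ∈ T, f q = f p → key p ≤ key q).card := by
  symm
  refine Finset.card_bij (fun p _ => f p) ?_ ?_ ?_
  · intro p hp
    exact Finset.mem_image_of_mem f (Finset.mem_filter.1 hp).1
  · intro p hp q hq hpq
    rw [Finset.mem_filter] at hp hq
    exact hkey (le_antisymm (hp.2 q hq.1 hpq.symm) (hq.2 p hp.1 hpq))
  · intro s hs
    obtain ⟨p, hp, rfl⟩ := Finset.mem_image.1 hs
    obtain ⟨q, hq, hmin⟩ := (T.filter fun q => f q = f p).exists_min_image key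
      ⟨p, Finset.mem_filter.2 ⟨hp, rfl⟩⟩
    rw [Finset.mem_filter] at hq
    refine ⟨q, Finset.mem_filter.2 ⟨hq.1, fun r hr hrq => ?_⟩, hq.2⟩
    exact hmin r (Finset.mem_filter.2 ⟨hr, hrq.trans hq.2⟩)

lemma mem_nsmul_iff_exists_exponent {S : Type*} [AddCommMonoid S] [DecidableEq S] {k : ℕ}
    (A : Finset S) (α : Fin k → S) (hα : ∀ s, s ∈ A ↔ ∃ i, α i = s) (h : ℕ) (s : S) :
    s ∈ h • A ↔ ∃ x : Fin k → ℕ, ∑ i, x i = h ∧ ∑ i, x i • α i = s := by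
  have hsingle (x : Fin k → ℕ) (i : Fin k) :
      ∑ j, (x + Pi.single i 1 : Fin k → ℕ) j = ∑ j, x j + 1 ∧
      ∑ j, (x + Pi.single i 1 : Fin k → ℕ) j • α j = ∑ j, x j • α j + α i := by
    simp [Finset.sum_add_distrib, add_smul, Pi.single_apply, ite_smul]
  induction h generalizing s with
  | zero =>
    simp only [zero_smul, Finset.mem_zero]
    constructor
    · rintro rfl
      exact ⟨0, by simp⟩
    · rintro ⟨x, hx, rfl⟩
      have : ∀ i, x i = 0 := by simpa using hx
      simp [this]
  | succ h ih =>
    rw [succ_nsmul, Finset.mem_add]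
    constructor
    · rintro ⟨t, ht, a, ha, rfl⟩
      obtain ⟨x, hx, rfl⟩ := (ih t).1 ht
      obtain ⟨i, rfl⟩ := (hα a).1 ha
      exact ⟨x + Pi.single i 1, by rw [(hsingle x i).1, hx], (hsingle x i).2⟩
    · rintro ⟨x, hx, rfl⟩
      obtain ⟨i, hi⟩ : ∃ i, x i ≠ 0 := by
        by_contra! hc
        simp [hc] at hx
      obtain ⟨y, rfl⟩ : ∃ y, x = y + Pi.single i 1 := by
        refine ⟨x - Pi.single i 1, (tsub_add_cancel_of_le fun j => ?_).symm⟩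
        rcases eq_or_ne j i with rfl | hj
        · simpa using Nat.one_le_iff_ne_zero.2 hi
        · simp [hj]
      rw [(hsingle y i).1] at hx
      exact ⟨_, (ih _).2 ⟨y, by omega, rfl⟩, α i, (hα _).2 ⟨i, rfl⟩, (hsingle y i).2.symm⟩

/-- The exponents `x` for which `(b, x)` is the lexicographically least representation of
`β b + ∑ i, x i • α i` in its degree. -/
def leastExponents {S : Type*} [AddCommMonoid S] {k l : ℕ} (α : Fin k → S) (β : Fin l → S)
    (b : Fin l) : Set (Fin k → ℕ) :=
  {x | ∀ (c : Fin l) (y : Fin k → ℕ), ∑ i, y i = ∑ i, x i →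
    β c + ∑ i, y i • α i = β b + ∑ i, x i • α i →
    toLex (b, toLex x) ≤ toLex (c, toLex y)}

lemma isLowerSet_leastExponents {S : Type*} [AddCommMonoid S] {k l : ℕ} (α : Fin k → S)
    (β : Fin l → S) (b : Fin l) : IsLowerSet (leastExponents α β b) := by
  intro x' x hx hx' c y hdeg hval
  obtain ⟨t, rfl⟩ := exists_add_of_le hx
  -- A competitor `(c, y)` of `(b, x)` gives the competitor `(c, y + t)` of `(b, x + t)`.
  have h := hx' c (y + t) (by simp [Finset.sum_add_distrib, hdeg])
    (by simp only [Pi.add_apply, add_smul, Finset.sum_add_distrib, ← add_assoc, hval])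
  rw [Prod.Lex.toLex_le_toLex] at h ⊢
  simpa only [toLex_add, add_le_add_iff_right] using h

/-- **Khovanskii's theorem with a translate.** If `A` and `B` are finite nonempty subsets of a
commutative monoid `S`, then `|B + hA|` agrees with a polynomial with rational coefficients
for all sufficiently large `h`. -/
theorem eventually_polynomial_growth_translate
    {S : Type*} [AddCommMonoid S] [DecidableEq S]
    (A B : Finset S) (hA : A.Nonempty) (hB : B.Nonempty) :
    ∃ p : Polynomial ℚ, ∃ N : ℕ, ∀ h : ℕ, N < h →
      ((B + h • A).card : ℚ) = Polynomial.eval (h : ℚ) p := by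
  classical
  have henum (C : Finset S) : ∃ γ : Fin C.card → S, ∀ s, s ∈ C ↔ ∃ i, γ i = s :=
    ⟨fun i => C.equivFin.symm i, fun s => ⟨fun hs => ⟨C.equivFin ⟨s, hs⟩, by simp⟩, by
      rintro ⟨i, rfl⟩
      exact (C.equivFin.symm i).2⟩⟩
  obtain ⟨α, hα⟩ := henum A
  obtain ⟨β, hβ⟩ := henum B
  suffices hcard : ∀ h, (B + h • A).card = ∑ b, degCount (leastExponents α β b) h by
    simp only [hcard]
    exact EventuallyPoly.sum _ fun b _ => eventuallyPoly_lowerSet (isLowerSet_leastExponents α β b)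
  intro h
  set T : Finset (Fin B.card × (Fin A.card → ℕ)) :=
    Finset.univ ×ˢ Finset.Nat.antidiagonalTuple A.card h with hT
  have himage : B + h • A = T.image fun p => β p.1 + ∑ i, p.2 i • α i := by
    ext s
    simp only [Finset.mem_add, mem_nsmul_iff_exists_exponent A α hα, hβ, Finset.mem_image, hT,
      Finset.mem_product, Finset.mem_univ, true_and, Finset.Nat.mem_antidiagonalTuple, Prod.exists]
    constructor
    · rintro ⟨_, ⟨b, rfl⟩, _, ⟨x, hx, rfl⟩, rfl⟩
      exact ⟨b, x, hx, rfl⟩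
    · rintro ⟨b, x, hx, rfl⟩
      exact ⟨_, ⟨b, rfl⟩, _, ⟨x, hx, rfl⟩, rfl⟩
  rw [himage, card_image_eq_card_least T _ (fun p => toLex (p.1, toLex p.2))
    (fun p q hpq => by simpa [Prod.ext_iff] using hpq)]
  unfold degCount
  rw [← Finset.card_sigma]
  refine Finset.card_bij' (fun p _ => ⟨p.1, p.2⟩) (fun y _ => (y.1, y.2)) ?_ ?_
    (fun _ _ => rfl) (fun _ _ => rfl)
  · rintro ⟨b, x⟩ hp
    simp only [hT, Finset.mem_filter, Finset.mem_product, Finset.mem_univ, true_and,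
      Finset.Nat.mem_antidiagonalTuple, Prod.forall] at hp
    simp only [Finset.mem_sigma, Finset.mem_univ, true_and, Finset.mem_filter,
      Finset.Nat.mem_antidiagonalTuple]
    exact ⟨hp.1, fun c y hy => hp.2 c y (hy.trans hp.1)⟩
  · rintro ⟨b, x⟩ hp
    simp only [Finset.mem_sigma, Finset.mem_univ, true_and, Finset.mem_filter,
      Finset.Nat.mem_antidiagonalTuple] at hp
    simp only [hT, Finset.mem_filter, Finset.mem_product, Finset.mem_univ, true_and,
      Finset.Nat.mem_antidiagonalTuple, Prod.forall]
    exact ⟨hp.1, fun c y hy => hp.2 c y (hy.trans hp.1.symm)⟩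
end
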